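/- Let C be a Weyl candidate on Minkowski space V with electric part E = E(C) and magnetic part B = B(C) with respect to a unit timelike vector n. Then the cubic Weyl scalars split as: (1/16) C^{μν}_{ λρ} C^{σπ}_{ μν} C^{λρ}_{ σπ} = E_{νλ}( 3 B_{μ}^{ λ} B^{μν} − E_{μ}^{ λ} E^{μν} ) and (1/16) C^{μν}_{ λρ} C^{σπ}_{ μν} (C*)^{λρ}_{ σπ} = B^{μν}( B_{μ}^{ λ} B_{νλ} − 3 E_{μ}^{ λ} E_{νλ} ), where all indices are raised with η. -/

import Mathlib

noncomputable section

/-- Minkowski space `V = ℝ⁴`. -/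
abbrev V4 : Type := Fin 4 → ℝ

/-- The Minkowski bilinear form of signature `(-,+,+,+)`. -/
def η (x y : V4) : ℝ := -(x 0 * y 0) + x 1 * y 1 + x 2 * y 2 + x 3 * y 3

/-- The standard basis of `V4`. -/
def e4 (a : Fin 4) : V4 := Pi.single a 1

/-- Components of the Minkowski metric `diag(-1,1,1,1)` (its own inverse). -/
def ηm (a b : Fin 4) : ℝ := if a = b then (if a = (0 : Fin 4) then -1 else 1) else 0

/-- A 4-linear form on `V4`, given by its components in the standard basis. -/
abbrev T4 : Type := Fin 4 → Fin 4 → Fin 4 → Fin 4 → ℝ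

/-- A bilinear form on `V4`, given by its components in the standard basis. -/
abbrev T2 : Type := Fin 4 → Fin 4 → ℝ

/-- Evaluation of a 4-linear form (given by components) on vectors. -/
def eval4 (W : T4) (x y z w : V4) : ℝ :=
  ∑ a : Fin 4, ∑ b : Fin 4, ∑ c : Fin 4, ∑ d : Fin 4, W a b c d * x a * y b * z c * w d

/-- The alternating volume 4-form with `vol(e₀,e₁,e₂,e₃) = 1`. -/
def volv (x y z w : V4) : ℝ := Matrix.det (Matrix.of ![x, y, z, w])

/-- Components `η_{αβγδ}` of the volume form. -/
def volc (a b c d : Fin 4) : ℝ := volv (e4 a) (e4 b) (e4 c) (e4 d)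

/-- Left dual `(*W)_{μνλρ} = ½ η_{μν}{}^{αβ} W_{αβλρ}`. -/
def leftDual (W : T4) : T4 := fun μ ν lam ρ =>
  (1/2) * ∑ γ : Fin 4, ∑ δ : Fin 4, ∑ a : Fin 4, ∑ b : Fin 4,
    volc μ ν γ δ * ηm γ a * ηm δ b * W a b lam ρ

/-- Right dual `(W*)_{μνλρ} = ½ W_{μν}{}^{αβ} η_{αβλρ}`. -/
def rightDual (W : T4) : T4 := fun μ ν lam ρ =>
  (1/2) * ∑ γ : Fin 4, ∑ δ : Fin 4, ∑ a : Fin 4, ∑ b : Fin 4,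
    W μ ν a b * ηm a γ * ηm b δ * volc γ δ lam ρ

/-- A Weyl candidate: pair antisymmetries, pair exchange, first Bianchi, trace-free. -/
def IsWeyl (W : T4) : Prop :=
  (∀ x y z w : V4, eval4 W x y z w = - eval4 W y x z w) ∧
  (∀ x y z w : V4, eval4 W x y z w = - eval4 W x y w z) ∧
  (∀ x y z w : V4, eval4 W x y z w = eval4 W z w x y) ∧
  (∀ x y z w : V4, eval4 W x y z w + eval4 W x z w y + eval4 W x w y z = 0) ∧
  (∀ x y : V4, ∑ a : Fin 4, ∑ b : Fin 4, ηm a b * eval4 W (e4 a) x (e4 b) y = 0)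

/-- Electric part `E(W)_{ab} = W(e_a, n, e_b, n)`. -/
def Epart (W : T4) (n : V4) : T2 := fun a b => eval4 W (e4 a) n (e4 b) n

/-- Magnetic part `B(W)_{ab} = (W*)(e_a, n, e_b, n)`. -/
def Bpart (W : T4) (n : V4) : T2 := fun a b => eval4 (rightDual W) (e4 a) n (e4 b) n

/-- Raise both indices of a bilinear form's components. -/
def up2 (S : T2) : T2 := fun a b => ∑ c : Fin 4, ∑ d : Fin 4, ηm a c * ηm b d * S c d

/-- Full contraction `S_{ab} T^{ab}`. -/
def contr2 (S T : T2) : ℝ := ∑ a : Fin 4, ∑ b : Fin 4, S a b * up2 T a b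

/-- Raise the first two indices with `η`: `W^{μν}{}_{λρ}`. -/
def upFirst2 (W : T4) : T4 := fun a b c d =>
  ∑ a' : Fin 4, ∑ b' : Fin 4, ηm a a' * ηm b b' * W a' b' c d

open Matrix

/-- The diagonal entries of the Minkowski metric. -/
def minkowskiSign (a : Fin 4) : ℝ := if a = 0 then -1 else 1

lemma ηm_eq (a b : Fin 4) : ηm a b = if a = b then minkowskiSign a else 0 := rfl

/-- A basis of the bivectors `S` with `S* = -i S`. -/
def selfDualBasis : Fin 3 → Matrix (Fin 4) (Fin 4) ℂ :=
  ![!![0, 1, 0, 0; -1, 0, 0, 0; 0, 0, 0, -Complex.I; 0, 0, Complex.I, 0],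
    !![0, 0, 1, 0; 0, 0, 0, Complex.I; -1, 0, 0, 0; 0, -Complex.I, 0, 0],
    !![0, 0, 0, 1; 0, 0, -Complex.I, 0; 0, Complex.I, 0, 0; -1, 0, 0, 0]]

lemma eval4_e4 (W : T4) (a b c d : Fin 4) :
    eval4 W (e4 a) (e4 b) (e4 c) (e4 d) = W a b c d := by
  simp [eval4, e4, Pi.single_apply]

lemma volc_eq_vandermonde (a b c d : Fin 4) :
    volc a b c d = ((b : ℝ) - a) * (c - a) * (d - a) * ((c - b) * (d - b)) * (d - c) / 12 := by
  have hmul : of ![e4 a, e4 b, e4 c, e4 d] * vandermonde (fun i : Fin 4 => (i : ℝ))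
      = vandermonde ![(a : ℝ), b, c, d] := by
    ext i j
    fin_cases i <;> simp [mul_apply, e4, Pi.single_apply, vandermonde_apply]
  have hdet := congrArg det hmul
  rw [det_mul, det_vandermonde, det_vandermonde] at hdet
  have hIoi : Finset.Ioi (0 : Fin 4) = {1, 2, 3} ∧ Finset.Ioi (1 : Fin 4) = {2, 3} ∧
      Finset.Ioi (2 : Fin 4) = {3} ∧ Finset.Ioi (3 : Fin 4) = ∅ := by decide
  obtain ⟨h0, h1, h2, h3⟩ := hIoi
  simp [Fin.prod_univ_four, h0, h1, h2, h3] at hdet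
  norm_num at hdet
  rw [volc, volv]
  linear_combination hdet / 12

lemma dual_selfDualBasis (j : Fin 3) (l r : Fin 4) :
    ∑ a, ∑ b, selfDualBasis j a b * (minkowskiSign a * minkowskiSign b * volc a b l r : ℝ)
      = -(2 * Complex.I) * selfDualBasis j l r := by
  simp only [Fin.sum_univ_four]
  fin_cases j <;> fin_cases l <;> fin_cases r <;>
    simp [selfDualBasis, minkowskiSign, volc_eq_vandermonde] <;>
    ring_nf <;> simp

/-- The matrix of self-dual bivectors, as a map from `ℂ³` to pairs of indices. -/
def pairMatrix : Matrix (Fin 4 × Fin 4) (Fin 3) ℂ := of fun p i => selfDualBasis i p.1 p.2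

/-- The metric induced on pairs of indices. -/
def pairMetric : Matrix (Fin 4 × Fin 4) (Fin 4 × Fin 4) ℂ :=
  diagonal fun p => ((minkowskiSign p.1 * minkowskiSign p.2 : ℝ) : ℂ)

/-- The contractions of the self-dual bivectors with a vector. -/
def contractMatrix (n : V4) : Matrix (Fin 4) (Fin 3) ℂ :=
  of fun a i => ∑ c, selfDualBasis i a c * n c

/-- The Minkowski metric as a complex matrix. -/
def metricMatrix : Matrix (Fin 4) (Fin 4) ℂ := diagonal fun a => (minkowskiSign a : ℂ)

lemma pairMatrix_gram : pairMatrixᵀ * pairMetric * pairMatrix = (-4 : ℂ) • 1 := by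
  ext i j
  simp only [pairMatrix, pairMetric, mul_apply, transpose_apply, of_apply,
    Fintype.sum_prod_type, Fin.sum_univ_four]
  fin_cases i <;> fin_cases j <;> simp [selfDualBasis, minkowskiSign] <;> ring_nf

lemma pairMatrix_conj_gram :
    pairMatrixᵀ * pairMetric * pairMatrix.map (starRingEnd ℂ) = 0 := by
  ext i j
  simp only [pairMatrix, pairMetric, mul_apply, transpose_apply, of_apply, map_apply,
    Fintype.sum_prod_type, Fin.sum_univ_four]
  fin_cases i <;> fin_cases j <;> simp [selfDualBasis, minkowskiSign]

lemma contractMatrix_gram (n : V4) :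
    (contractMatrix n)ᵀ * metricMatrix * contractMatrix n = (-(η n n : ℝ) : ℂ) • 1 := by
  ext i j
  simp only [contractMatrix, metricMatrix, mul_apply, transpose_apply, of_apply,
    Fin.sum_univ_four]
  fin_cases i <;> fin_cases j <;> simp [selfDualBasis, minkowskiSign, η] <;> ring_nf <;> simp <;>
    ring_nf

lemma IsWeyl.exists_selfDual_rep {C : T4} (hC : IsWeyl C) :
    ∃ Q : Matrix (Fin 3) (Fin 3) ℂ, Qᵀ = Q ∧ ∀ a b c d,
      C a b c d = ((pairMatrix * Q * pairMatrixᵀ) (a, b) (c, d)).re := by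
  obtain ⟨hl, hr, hx, hb, ht⟩ := hC
  replace hl a b c d : C a b c d = -C b a c d := by
    simpa only [eval4_e4] using hl (e4 a) (e4 b) (e4 c) (e4 d)
  replace hr a b c d : C a b c d = -C a b d c := by
    simpa only [eval4_e4] using hr (e4 a) (e4 b) (e4 c) (e4 d)
  replace hx a b c d : C a b c d = C c d a b := by
    simpa only [eval4_e4] using hx (e4 a) (e4 b) (e4 c) (e4 d)
  replace hb a b c d : C a b c d + C a c d b + C a d b c = 0 := by
    simpa only [eval4_e4] using hb (e4 a) (e4 b) (e4 c) (e4 d)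
  replace ht b d : -C 0 b 0 d + C 1 b 1 d + C 2 b 2 d + C 3 b 3 d = 0 := by
    simpa [eval4_e4, ηm_eq, minkowskiSign, Fin.sum_univ_four] using ht (e4 b) (e4 d)
  have hl0 a c d : C a a c d = 0 := by linarith [hl a a c d]
  have hr0 a b c : C a b c c = 0 := by linarith [hr a b c c]
  have b0 := hb 0 1 2 3
  have t00 := ht 0 0
  have t01 := ht 0 1
  have t02 := ht 0 2
  have t03 := ht 0 3
  have t11 := ht 1 1
  have t12 := ht 1 2
  have t13 := ht 1 3
  have t22 := ht 2 2
  have t23 := ht 2 3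
  have t33 := ht 3 3
  simp only [hl0, hr0, hl 1 0, hl 2 0, hl 3 0, hl 2 1, hl 3 1, hl 3 2, hr _ _ 1 0, hr _ _ 2 0,
    hr _ _ 3 0, hr _ _ 2 1, hr _ _ 3 1, hr _ _ 3 2] at b0 t00 t01 t02 t03 t11 t12 t13 t22 t23 t33
  let Q : Matrix (Fin 3) (Fin 3) ℂ :=
    !![⟨C 0 1 0 1, C 0 1 2 3⟩, ⟨C 0 1 0 2, -C 0 1 1 3⟩, ⟨C 0 1 0 3, C 0 1 1 2⟩;
      ⟨C 0 1 0 2, -C 0 1 1 3⟩, ⟨C 0 2 0 2, -C 0 2 1 3⟩, ⟨C 0 2 0 3, C 0 2 1 2⟩;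
      ⟨C 0 1 0 3, C 0 1 1 2⟩, ⟨C 0 2 0 3, C 0 2 1 2⟩, ⟨C 0 3 0 3, C 0 3 1 2⟩]
  have key a b c d (hab : a < b) (hcd : c < d) :
      C a b c d = ((pairMatrix * Q * pairMatrixᵀ) (a, b) (c, d)).re := by
    simp only [mul_apply, Fin.sum_univ_three, pairMatrix, transpose_apply, of_apply]
    fin_cases a <;> fin_cases b <;> first | exact absurd hab (by decide) | skip
    all_goals
      clear hab
      fin_cases c <;> fin_cases d <;> first | exact absurd hcd (by decide) | skip
      all_goals
        simp [selfDualBasis, Q]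
        try linarith [hx 0 1 0 2, hx 0 1 0 3, hx 0 1 1 2, hx 0 1 1 3, hx 0 1 2 3, hx 0 2 0 3,
          hx 0 2 1 2, hx 0 2 1 3, hx 0 2 2 3, hx 0 3 1 2, hx 0 3 1 3, hx 0 3 2 3, hx 1 2 1 3,
          hx 1 2 2 3, hx 1 3 2 3]
  have basis_antisymm i a b : selfDualBasis i a b = -selfDualBasis i b a := by
    fin_cases i <;> fin_cases a <;> fin_cases b <;> simp [selfDualBasis]
  have Zl a b q : (pairMatrix * Q * pairMatrixᵀ) (a, b) q
      = -(pairMatrix * Q * pairMatrixᵀ) (b, a) q := by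
    simp only [mul_apply, Fin.sum_univ_three, pairMatrix, transpose_apply, of_apply]
    simp only [fun i => basis_antisymm i a b]
    ring
  have Zr p c d : (pairMatrix * Q * pairMatrixᵀ) p (c, d)
      = -(pairMatrix * Q * pairMatrixᵀ) p (d, c) := by
    simp only [mul_apply, Fin.sum_univ_three, pairMatrix, transpose_apply, of_apply]
    simp only [fun i => basis_antisymm i c d]
    ring
  have Zl0 a q : (pairMatrix * Q * pairMatrixᵀ) (a, a) q = 0 := self_eq_neg.mp (Zl a a q)
  have Zr0 p c : (pairMatrix * Q * pairMatrixᵀ) p (c, c) = 0 := self_eq_neg.mp (Zr p c c)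
  refine ⟨Q, by ext i j; fin_cases i <;> fin_cases j <;> rfl, fun a b c d => ?_⟩
  have half a b c d (hab : a < b) :
      C a b c d = ((pairMatrix * Q * pairMatrixᵀ) (a, b) (c, d)).re := by
    rcases lt_trichotomy c d with h | rfl | h
    · exact key a b c d hab h
    · rw [hr0, Zr0, Complex.zero_re]
    · rw [hr, Zr, Complex.neg_re, key a b d c hab h]
  rcases lt_trichotomy a b with h | rfl | h
  · exact half a b c d h
  · rw [hl0, Zl0, Complex.zero_re]
  · rw [hl, Zl, Complex.neg_re, half b a c d h]

lemma trace_cube_sandwich {m : Type*} [Fintype m] [DecidableEq m] (K : Matrix m m ℂ)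
    (M : Matrix m (Fin 3) ℂ) (Q : Matrix (Fin 3) (Fin 3) ℂ) (c : ℂ) (h : Mᵀ * K * M = c • 1) :
    (K * (M * Q * Mᵀ) * (K * (M * Q * Mᵀ)) * (K * (M * Q * Mᵀ))).trace
      = c ^ 3 * (Q * Q * Q).trace := by
  have e : K * (M * Q * Mᵀ) * (K * (M * Q * Mᵀ)) * (K * (M * Q * Mᵀ))
      = K * M * (Q * (Mᵀ * K * M) * Q * (Mᵀ * K * M) * Q * Mᵀ) := by
    simp only [Matrix.mul_assoc]
  rw [e, trace_mul_comm]
  have e' : Q * (Mᵀ * K * M) * Q * (Mᵀ * K * M) * Q * Mᵀ * (K * M)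
      = Q * (Mᵀ * K * M) * Q * (Mᵀ * K * M) * Q * (Mᵀ * K * M) := by
    simp only [Matrix.mul_assoc]
  rw [e', h]
  simp only [Matrix.mul_smul, Matrix.smul_mul, Matrix.mul_one, trace_smul, smul_eq_mul]
  ring

lemma upFirst2_apply (W : T4) (a b c d : Fin 4) :
    upFirst2 W a b c d = minkowskiSign a * minkowskiSign b * W a b c d := by
  simp [upFirst2, ηm_eq]

lemma up2_apply (S : T2) (a b : Fin 4) :
    up2 S a b = minkowskiSign a * minkowskiSign b * S a b := by
  simp [up2, ηm_eq]

lemma rightDual_apply (W : T4) (a b c d : Fin 4) :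
    rightDual W a b c d
      = (1/2) * ∑ γ, ∑ δ, W a b γ δ * (minkowskiSign γ * minkowskiSign δ * volc γ δ c d) := by
  simp [rightDual, ηm_eq, mul_assoc]

/-- The components of a 4-linear form as a complex matrix on pairs of indices. -/
def toPairMatrix (W : T4) : Matrix (Fin 4 × Fin 4) (Fin 4 × Fin 4) ℂ :=
  of fun p q => (W p.1 p.2 q.1 q.2 : ℂ)

/-- The components of a bilinear form as a complex matrix. -/
def toComplexMatrix (S : T2) : Matrix (Fin 4) (Fin 4) ℂ := of fun a b => (S a b : ℂ)

lemma ofReal_cubic_contraction (X Y Z : T4) :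
    ((∑ μ, ∑ ν, ∑ lam, ∑ ρ, ∑ σ, ∑ π,
      upFirst2 X μ ν lam ρ * upFirst2 Y σ π μ ν * upFirst2 Z lam ρ σ π : ℝ) : ℂ)
      = (pairMetric * toPairMatrix X * (pairMetric * toPairMatrix Z)
          * (pairMetric * toPairMatrix Y)).trace := by
  rw [Matrix.mul_assoc]
  simp only [trace, diag_apply, pairMetric, toPairMatrix]
  simp only [mul_apply (M := diagonal _ * of _), diagonal_mul, of_apply, Fintype.sum_prod_type,
    Finset.mul_sum, upFirst2_apply]
  push_cast
  refine Finset.sum_congr rfl fun _ _ => Finset.sum_congr rfl fun _ _ =>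
    Finset.sum_congr rfl fun _ _ => Finset.sum_congr rfl fun _ _ =>
    Finset.sum_congr rfl fun _ _ => Finset.sum_congr rfl fun _ _ => ?_
  ring

/-- The cyclic contraction `X_a^b Y_b^c Z_c^a` of three bilinear forms. -/
def cyclicContr (X Y Z : T2) : ℝ :=
  ∑ a, ∑ b, ∑ c, minkowskiSign a * minkowskiSign b * minkowskiSign c * X a b * Y b c * Z c a

lemma ofReal_cyclicContr (X Y Z : T2) :
    (cyclicContr X Y Z : ℂ) = (metricMatrix * toComplexMatrix X
      * (metricMatrix * toComplexMatrix Y) * (metricMatrix * toComplexMatrix Z)).trace := by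
  rw [Matrix.mul_assoc]
  simp only [trace, diag_apply, metricMatrix, toComplexMatrix, cyclicContr]
  simp only [mul_apply (M := diagonal _ * of _), diagonal_mul, of_apply, Finset.mul_sum]
  push_cast
  refine Finset.sum_congr rfl fun _ _ => Finset.sum_congr rfl fun _ _ =>
    Finset.sum_congr rfl fun _ _ => ?_
  ring

lemma trace_cube_add_I_smul (P R : Matrix (Fin 4) (Fin 4) ℂ) :
    ((P + Complex.I • R) * (P + Complex.I • R) * (P + Complex.I • R)).trace
      = (P * P * P).trace - 3 * (P * R * R).trace
        + Complex.I * (3 * (R * P * P).trace - (R * R * R).trace) := by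
  have h1 : (R * P * R).trace = (P * R * R).trace := by
    rw [Matrix.mul_assoc, trace_mul_comm]
  have h2 : (R * R * P).trace = (P * R * R).trace := by rw [trace_mul_comm, Matrix.mul_assoc]
  have h3 : (P * R * P).trace = (R * P * P).trace := by
    rw [Matrix.mul_assoc, trace_mul_comm]
  have h4 : (P * P * R).trace = (R * P * P).trace := by rw [trace_mul_comm, Matrix.mul_assoc]
  simp only [Matrix.mul_add, Matrix.add_mul, Matrix.mul_smul, Matrix.smul_mul, trace_add,
    trace_smul, smul_eq_mul, h1, h2, h3, h4]
  linear_combination (3 * (P * R * R).trace + Complex.I * (R * R * R).trace) * Complex.I_mul_I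

lemma map_conj_trace {m : Type*} [Fintype m] (M : Matrix m m ℂ) :
    (M.map (starRingEnd ℂ)).trace = starRingEnd ℂ M.trace := by
  simp [trace]

lemma trace_triple_orthogonal {m : Type*} [Fintype m] (X Y : Matrix m m ℂ) (hXY : X * Y = 0)
    (hYX : Y * X = 0) (s t : ℂ) :
    ((X + Y) * (s • X + t • Y) * (X + Y)).trace
      = s * (X * X * X).trace + t * (Y * Y * Y).trace := by
  simp [Matrix.mul_add, Matrix.add_mul, hXY, hYX, Matrix.mul_assoc]

lemma selfDual_trace (Q : Matrix (Fin 3) (Fin 3) ℂ) (s t : ℂ) :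
    let X := pairMetric * (pairMatrix * Q * pairMatrixᵀ)
    let Y := X.map (starRingEnd ℂ)
    ((X + Y) * (s • X + t • Y) * (X + Y)).trace
      = -64 * (s * (Q * Q * Q).trace + t * starRingEnd ℂ (Q * Q * Q).trace) := by
  intro X Y
  have hD : pairMetric.map (starRingEnd ℂ) = pairMetric := by
    simp [pairMetric, diagonal_map]
  have hY : Y = pairMetric * (pairMatrix.map (starRingEnd ℂ) * Q.map (starRingEnd ℂ)
      * (pairMatrix.map (starRingEnd ℂ))ᵀ) := by
    simp only [Y, X, Matrix.map_mul, hD, transpose_map]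
  have hXY : X * Y = 0 := by
    have e : X * Y = pairMetric * pairMatrix * Q
        * (pairMatrixᵀ * pairMetric * pairMatrix.map (starRingEnd ℂ))
        * Q.map (starRingEnd ℂ) * (pairMatrix.map (starRingEnd ℂ))ᵀ := by
      rw [hY]; simp only [X, Matrix.mul_assoc]
    rw [e, pairMatrix_conj_gram]
    simp
  have hYX : Y * X = 0 := by
    have hXX : Y.map (starRingEnd ℂ) = X := by
      ext; simp [Y]
    have e := congrArg (fun M => M.map (starRingEnd ℂ)) hXY
    simpa only [Matrix.map_mul, hXX, Y, Matrix.map_zero, map_zero] using e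
  have tX : (X * X * X).trace = -64 * (Q * Q * Q).trace := by
    rw [trace_cube_sandwich pairMetric pairMatrix Q _ pairMatrix_gram]
    norm_num
  have tY : (Y * Y * Y).trace = -64 * starRingEnd ℂ (Q * Q * Q).trace := by
    simp only [Y, ← Matrix.map_mul, map_conj_trace, tX, map_mul, map_neg, Complex.conj_ofNat]
  rw [trace_triple_orthogonal X Y hXY hYX, tX, tY]
  ring

lemma rightDual_selfDual_rep {C : T4} {Q : Matrix (Fin 3) (Fin 3) ℂ}
    (h : ∀ a b c d, C a b c d = ((pairMatrix * Q * pairMatrixᵀ) (a, b) (c, d)).re)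
    (a b c d : Fin 4) :
    rightDual C a b c d = ((pairMatrix * Q * pairMatrixᵀ) (a, b) (c, d)).im := by
  have key : ∑ γ, ∑ δ, (pairMatrix * Q * pairMatrixᵀ) (a, b) (γ, δ)
        * (minkowskiSign γ * minkowskiSign δ * volc γ δ c d : ℝ)
      = -(2 * Complex.I) * (pairMatrix * Q * pairMatrixᵀ) (a, b) (c, d) := by
    have hrow γ δ : (pairMatrix * Q * pairMatrixᵀ) (a, b) (γ, δ)
        = ∑ j, (pairMatrix * Q) (a, b) j * selfDualBasis j γ δ := by
      rw [mul_apply]; rfl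
    simp only [hrow, Finset.sum_mul, Finset.mul_sum, mul_assoc]
    rw [Finset.sum_congr rfl fun _ _ => Finset.sum_comm, Finset.sum_comm]
    refine Finset.sum_congr rfl fun j _ => ?_
    have e := congrArg ((pairMatrix * Q) (a, b) j * ·) (dual_selfDualBasis j c d)
    simp only [Finset.mul_sum, mul_assoc] at e
    rw [e]
    ring
  have hre := congrArg Complex.re key
  simp only [Complex.re_sum, Complex.re_mul_ofReal, ← h] at hre
  rw [rightDual_apply, hre]
  simp

lemma contract_selfDual (Q : Matrix (Fin 3) (Fin 3) ℂ) (n : V4) (a b : Fin 4) :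
    (contractMatrix n * Q * (contractMatrix n)ᵀ) a b
      = ∑ c, ∑ d, (pairMatrix * Q * pairMatrixᵀ) (a, c) (b, d) * ((n c * n d : ℝ) : ℂ) := by
  simp only [mul_apply, transpose_apply, contractMatrix, pairMatrix, of_apply, Fin.sum_univ_four,
    Fin.sum_univ_three]
  push_cast
  ring

lemma eval4_e4_self (W : T4) (n : V4) (a b : Fin 4) :
    eval4 W (e4 a) n (e4 b) n = ∑ c, ∑ d, W a c b d * (n c * n d) := by
  simp [eval4, e4, Pi.single_apply, mul_assoc]

lemma Epart_selfDual_rep {C : T4} {Q : Matrix (Fin 3) (Fin 3) ℂ}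
    (h : ∀ a b c d, C a b c d = ((pairMatrix * Q * pairMatrixᵀ) (a, b) (c, d)).re)
    (n : V4) (a b : Fin 4) :
    Epart C n a b = ((contractMatrix n * Q * (contractMatrix n)ᵀ) a b).re := by
  simp only [Epart, eval4_e4_self, contract_selfDual, Complex.re_sum, Complex.re_mul_ofReal, h]

lemma Bpart_selfDual_rep {C : T4} {Q : Matrix (Fin 3) (Fin 3) ℂ}
    (h : ∀ a b c d, C a b c d = ((pairMatrix * Q * pairMatrixᵀ) (a, b) (c, d)).re)
    (n : V4) (a b : Fin 4) :
    Bpart C n a b = ((contractMatrix n * Q * (contractMatrix n)ᵀ) a b).im := by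
  simp only [Bpart, eval4_e4_self, contract_selfDual, Complex.im_sum, Complex.im_mul_ofReal,
    rightDual_selfDual_rep h]

lemma electric_contraction_eq (E B : T2) (hE : ∀ a b, E a b = E b a) (hB : ∀ a b, B a b = B b a) :
    ∑ ν, ∑ lam, E ν lam *
      (3 * (∑ μ, (∑ l', ηm lam l' * B μ l') * up2 B μ ν)
        - (∑ μ, (∑ l', ηm lam l' * E μ l') * up2 E μ ν))
      = 3 * cyclicContr E B B - cyclicContr E E E := by
  simp only [cyclicContr, up2_apply, ηm_eq, ite_mul, zero_mul, Finset.sum_ite_eq,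
    Finset.mem_univ, if_true, Finset.mul_sum, ← Finset.sum_sub_distrib]
  refine Finset.sum_congr rfl fun a _ => Finset.sum_congr rfl fun b _ =>
    Finset.sum_congr rfl fun c _ => ?_
  rw [hE c b, hB c b]
  ring

lemma magnetic_contraction_eq (E B : T2) (hE : ∀ a b, E a b = E b a) (hB : ∀ a b, B a b = B b a) :
    ∑ μ, ∑ ν, up2 B μ ν *
      ((∑ lam, (∑ l', ηm lam l' * B μ l') * B ν lam)
        - 3 * (∑ lam, (∑ l', ηm lam l' * E μ l') * E ν lam))
      = cyclicContr B B B - 3 * cyclicContr B E E := by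
  simp only [cyclicContr, up2_apply, ηm_eq, ite_mul, zero_mul, Finset.sum_ite_eq,
    Finset.mem_univ, if_true, Finset.mul_sum, ← Finset.sum_sub_distrib]
  refine Finset.sum_congr rfl fun a _ => Finset.sum_congr rfl fun b _ =>
    Finset.sum_congr rfl fun c _ => ?_
  rw [hE a c, hB a c]
  ring

/-- The complex cube of `E + iB` splits into the two real cubic contractions. -/
lemma trace_cube_eq_cyclicContr (E B : T2) (F : Matrix (Fin 4) (Fin 4) ℂ)
    (hE : ∀ a b, E a b = (F a b).re) (hB : ∀ a b, B a b = (F a b).im) :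
    (metricMatrix * F * (metricMatrix * F) * (metricMatrix * F)).trace
      = ((cyclicContr E E E - 3 * cyclicContr E B B : ℝ) : ℂ)
        + ((3 * cyclicContr B E E - cyclicContr B B B : ℝ) : ℂ) * Complex.I := by
  have hF : F = toComplexMatrix E + Complex.I • toComplexMatrix B := by
    ext a b
    simp [toComplexMatrix, hE, hB, mul_comm Complex.I, Complex.re_add_im]
  rw [hF, Matrix.mul_add, Matrix.mul_smul, trace_cube_add_I_smul]
  push_cast
  simp only [ofReal_cyclicContr]
  ring

lemma pairMetric_mul_eq_add_conj (W : T4) (s : ℂ)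
    (Z : Matrix (Fin 4 × Fin 4) (Fin 4 × Fin 4) ℂ)
    (h : ∀ a b c d, W a b c d = (s * Z (a, b) (c, d)).re) :
    pairMetric * toPairMatrix W = (1 / 2 : ℂ) • (s • (pairMetric * Z)
      + starRingEnd ℂ s • (pairMetric * Z).map (starRingEnd ℂ)) := by
  ext ⟨a, b⟩ ⟨c, d⟩
  have hre := Complex.re_eq_add_conj (s * Z (a, b) (c, d))
  rw [map_mul] at hre
  simp [pairMetric, toPairMatrix, diagonal_mul, h, -Complex.mul_re, hre]
  ring

/-- the cubic Weyl scalars split as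
`(1/16) C^{μν}{}_{λρ} C^{σπ}{}_{μν} C^{λρ}{}_{σπ} = E_{νλ}(3B_μ{}^λ B^{μν} − E_μ{}^λ E^{μν})` and
`(1/16) C^{μν}{}_{λρ} C^{σπ}{}_{μν} (C*)^{λρ}{}_{σπ} = B^{μν}(B_μ{}^λ B_{νλ} − 3E_μ{}^λ E_{νλ})`. -/
theorem stmt_4 (C : T4) (hC : IsWeyl C) (n : V4) (hn : η n n = -1)
    (E B : T2) (hE : E = Epart C n) (hB : B = Bpart C n) :
    (1/16) * (∑ μ : Fin 4, ∑ ν : Fin 4, ∑ lam : Fin 4, ∑ ρ : Fin 4,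
        ∑ σ : Fin 4, ∑ π : Fin 4,
          upFirst2 C μ ν lam ρ * upFirst2 C σ π μ ν * upFirst2 C lam ρ σ π)
      = ∑ ν : Fin 4, ∑ lam : Fin 4, E ν lam *
          (3 * (∑ μ : Fin 4, (∑ l' : Fin 4, ηm lam l' * B μ l') * up2 B μ ν)
            - (∑ μ : Fin 4, (∑ l' : Fin 4, ηm lam l' * E μ l') * up2 E μ ν)) ∧
    (1/16) * (∑ μ : Fin 4, ∑ ν : Fin 4, ∑ lam : Fin 4, ∑ ρ : Fin 4,
        ∑ σ : Fin 4, ∑ π : Fin 4,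
          upFirst2 C μ ν lam ρ * upFirst2 C σ π μ ν * upFirst2 (rightDual C) lam ρ σ π)
      = ∑ μ : Fin 4, ∑ ν : Fin 4, up2 B μ ν *
          ((∑ lam : Fin 4, (∑ l' : Fin 4, ηm lam l' * B μ l') * B ν lam)
            - 3 * (∑ lam : Fin 4, (∑ l' : Fin 4, ηm lam l' * E μ l') * E ν lam)) := by
  obtain ⟨Q, hQ, h⟩ := hC.exists_selfDual_rep
  have hE' a b : E a b = ((contractMatrix n * Q * (contractMatrix n)ᵀ) a b).re := by
    rw [hE, Epart_selfDual_rep h]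
  have hB' a b : B a b = ((contractMatrix n * Q * (contractMatrix n)ᵀ) a b).im := by
    rw [hB, Bpart_selfDual_rep h]
  have hF a b : (contractMatrix n * Q * (contractMatrix n)ᵀ) a b
      = (contractMatrix n * Q * (contractMatrix n)ᵀ) b a := by
    rw [← transpose_apply (contractMatrix n * Q * _)]
    simp only [transpose_mul, transpose_transpose, hQ, Matrix.mul_assoc]
  have hEs a b : E a b = E b a := by rw [hE', hE', hF]
  have hBs a b : B a b = B b a := by rw [hB', hB', hF]
  have hQF : (Q * Q * Q).trace = ((cyclicContr E E E - 3 * cyclicContr E B B : ℝ) : ℂ)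
      + ((3 * cyclicContr B E E - cyclicContr B B B : ℝ) : ℂ) * Complex.I := by
    rw [← trace_cube_eq_cyclicContr E B _ hE' hB',
      trace_cube_sandwich metricMatrix _ Q _ (contractMatrix_gram n), hn]
    norm_num
  have hC1 := pairMetric_mul_eq_add_conj C 1 _ fun a b c d => by rw [one_mul]; exact h a b c d
  have hC2 := pairMetric_mul_eq_add_conj (rightDual C) (-Complex.I)
    (pairMatrix * Q * pairMatrixᵀ) fun a b c d => by simp [rightDual_selfDual_rep h]
  simp only [map_one, one_smul] at hC1
  rw [electric_contraction_eq E B hEs hBs, magnetic_contraction_eq E B hEs hBs]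
  constructor
  · apply Complex.ofReal_injective
    have ht := selfDual_trace Q 1 1
    simp only [one_smul] at ht
    rw [Complex.ofReal_mul, ofReal_cubic_contraction, hC1]
    simp only [Matrix.mul_smul, Matrix.smul_mul, trace_smul, smul_eq_mul, ht, hQF]
    simp [Complex.conj_ofNat]
    ring
  · apply Complex.ofReal_injective
    have ht := selfDual_trace Q (-Complex.I) (starRingEnd ℂ (-Complex.I))
    rw [Complex.ofReal_mul, ofReal_cubic_contraction, hC1, hC2]
    simp only [Matrix.mul_smul, Matrix.smul_mul, trace_smul, smul_eq_mul, ht, hQF]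
    simp [Complex.conj_ofNat]
    ring_nf
    simp
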